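/- Let n ≥ 1 be an integer, let C_0 be the 2×2 real matrix with rows (1, 1) and (0, 1), and let C_n be the 2×2 real matrix with rows (0, 0) and ((1/n)·e^{1 + 1/n}, 0). Then for every k ≥ 1 and every ordered product P = M_k M_{k−1} ⋯ M_1 with each factor M_i ∈ {C_0, C_n}, the spectral radius of P satisfies ρ(P) ≤ e^{k/n}; equivalently, the normalized spectral radius ρ(P)^{1/k} is at most e^{1/n}. In particular, C_0^n C_n attains this bound, so it is a spectral maximizing product for the pair {C_0, C_n}. -/

import Mathlib

/-- The spectral radius of a real square matrix: the maximum modulus of its complex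
eigenvalues, i.e. the spectral radius of the complexified matrix. -/
noncomputable def realMatrixSpectralRadius {n : ℕ} (M : Matrix (Fin n) (Fin n) ℝ) : ENNReal :=
  spectralRadius ℂ (M.map (fun a => (a : ℂ)))

/-!
For `t > 0`, put `A = !![1, 1; 0, 1]`, `B = !![0, 0; t * exp (1 + t), 0]` and
`N v = sup_m exp (-m t) |(A ^ m v)₀|`, a norm on `ℂ²`. Shifting `m` gives `N (A v) ≤ exp t * N v`.
Since `(A ^ m (B v))₀ = m t exp (1 + t) v₀` and `|v₀| ≤ N v`, the bound `N (B v) ≤ exp t * N v`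
reduces to `m t ≤ exp (m t - 1)`. Thus a product of `k` factors has operator norm at most
`exp (k t)`, which bounds its eigenvalues. Equality in `m t ≤ exp (m t - 1)` holds at `m t = 1`,
and there the trace `m t exp (1 + t)` of the rank-one matrix `A ^ m * B` reaches the bound.
-/

open Matrix

section EigenvalueBounds

theorem norm_eigenvalue_le_of_seminorm_map_le {𝕜 E : Type*} [NormedField 𝕜] [AddCommGroup E]
    [Module 𝕜 E] {p : Seminorm 𝕜 E} (hp : ∀ v, p v = 0 → v = 0) {T : Module.End 𝕜 E} {c : ℝ}
    (hT : ∀ v, p (T v) ≤ c * p v) {μ : 𝕜} (hμ : T.HasEigenvalue μ) : ‖μ‖ ≤ c := by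
  obtain ⟨v, hv⟩ := hμ.exists_hasEigenvector
  have hpv : 0 < p v := (apply_nonneg p v).lt_of_ne' fun h => hv.2 (hp v h)
  refine le_of_mul_le_mul_right ?_ hpv
  simpa only [hv.apply_eq_smul, map_smul_eq_mul] using hT v

theorem seminorm_list_prod_le {𝕜 E : Type*} [SeminormedRing 𝕜] [AddCommGroup E] [Module 𝕜 E]
    {p : Seminorm 𝕜 E} {c : ℝ} (hc : 0 ≤ c) {l : List (Module.End 𝕜 E)}
    (hl : ∀ T ∈ l, ∀ v, p (T v) ≤ c * p v) (v : E) : p (l.prod v) ≤ c ^ l.length * p v := by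
  induction l with
  | nil => simp
  | cons T l ih =>
    obtain ⟨hT, hl⟩ := List.forall_mem_cons.1 hl
    calc p ((T :: l).prod v) = p (T (l.prod v)) := by rw [List.prod_cons, Module.End.mul_apply]
      _ ≤ c * p (l.prod v) := hT _
      _ ≤ c * (c ^ l.length * p v) := mul_le_mul_of_nonneg_left (ih hl) hc
      _ = c ^ (T :: l).length * p v := by rw [List.length_cons, pow_succ', mul_assoc]

variable {n : ℕ}

theorem realMatrixSpectralRadius_le_of_seminorm {p : Seminorm ℂ (Fin n → ℂ)}
    (hp : ∀ v, p v = 0 → v = 0) {M : Matrix (Fin n) (Fin n) ℝ} {c : ℝ}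
    (hM : ∀ v, p (M.map Complex.ofReal *ᵥ v) ≤ c * p v) :
    realMatrixSpectralRadius M ≤ ENNReal.ofReal c := by
  refine iSup₂_le fun μ hμ => ?_
  rw [← spectrum_toLin', ← Module.End.hasEigenvalue_iff_mem_spectrum] at hμ
  rw [← enorm_eq_nnnorm, ← ofReal_norm]
  exact ENNReal.ofReal_le_ofReal (norm_eigenvalue_le_of_seminorm_map_le hp hM hμ)

theorem realMatrixSpectralRadius_list_prod_le_of_seminorm {p : Seminorm ℂ (Fin n → ℂ)}
    (hp : ∀ v, p v = 0 → v = 0) {c : ℝ} (hc : 0 ≤ c) {l : List (Matrix (Fin n) (Fin n) ℝ)}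
    (hl : ∀ M ∈ l, ∀ v, p (M.map Complex.ofReal *ᵥ v) ≤ c * p v) :
    realMatrixSpectralRadius l.prod ≤ ENNReal.ofReal (c ^ l.length) := by
  let toEnd : Matrix (Fin n) (Fin n) ℝ →+* Module.End ℂ (Fin n → ℂ) :=
    toLinAlgEquiv'.toRingEquiv.toRingHom.comp Complex.ofRealHom.mapMatrix
  refine realMatrixSpectralRadius_le_of_seminorm hp fun v => ?_
  have h := seminorm_list_prod_le hc (List.forall_mem_map.2 hl : ∀ T ∈ l.map toEnd, _) v
  rwa [← map_list_prod, List.length_map] at h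

theorem enorm_le_realMatrixSpectralRadius_of_isRoot_charpoly {M : Matrix (Fin n) (Fin n) ℝ} {μ : ℝ}
    (hμ : M.charpoly.IsRoot μ) : ‖μ‖ₑ ≤ realMatrixSpectralRadius M := by
  have hmem : (μ : ℂ) ∈ spectrum ℂ (M.map Complex.ofReal) := by
    rw [mem_spectrum_iff_isRoot_charpoly]
    exact (charpoly_map M Complex.ofRealHom).symm ▸ hμ.map (f := Complex.ofRealHom)
  calc ‖μ‖ₑ = ‖(μ : ℂ)‖ₑ := by rw [← ofReal_norm, ← ofReal_norm, Complex.norm_real]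
    _ ≤ realMatrixSpectralRadius M :=
      le_iSup₂ (f := fun (z : ℂ) (_ : z ∈ spectrum ℂ (M.map Complex.ofReal)) => ‖z‖ₑ) _ hmem

end EigenvalueBounds

section ShearSeminorm

/-- The seminorm `v ↦ sup_m exp (-m t) |v₀ + m v₁|` on `ℂ²`, an extremal norm for the matrices
`!![1, 1; 0, 1]` and `!![0, 0; t * exp (1 + t), 0]` when `t > 0`; the number `v₀ + m v₁` is the
first coordinate of `!![1, 1; 0, 1] ^ m *ᵥ v`. For `t ≤ 0` the supremum is infinite
and the definition takes a junk value. -/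
noncomputable def shearSeminorm (t : ℝ) : Seminorm ℂ (Fin 2 → ℂ) :=
  ⨆ m : ℕ, (Real.exp (-(m * t))).toNNReal •
    (normSeminorm ℂ ℂ).comp (LinearMap.proj 0 + (m : ℂ) • LinearMap.proj 1)

variable {t : ℝ}

theorem exp_neg_mul_norm_add_mul_le (ht : 0 < t) (x y : ℂ) (m : ℕ) :
    Real.exp (-(m * t)) * ‖x + m * y‖ ≤ ‖x‖ + ‖y‖ / t := by
  have exp_le_one : Real.exp (-(m * t)) ≤ 1 :=
    Real.exp_le_one_iff.2 (neg_nonpos.2 (by positivity))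
  have mul_exp_le : Real.exp (-(m * t)) * m ≤ 1 / t := by
    rw [Real.exp_neg, inv_mul_le_iff₀ (Real.exp_pos _), mul_one_div, le_div_iff₀ ht]
    linarith [Real.add_one_le_exp (m * t)]
  calc Real.exp (-(m * t)) * ‖x + m * y‖
      ≤ Real.exp (-(m * t)) * (‖x‖ + m * ‖y‖) := by
        gcongr
        simpa using norm_add_le x (m * y)
    _ = Real.exp (-(m * t)) * ‖x‖ + Real.exp (-(m * t)) * m * ‖y‖ := by ring
    _ ≤ 1 * ‖x‖ + 1 / t * ‖y‖ := by gcongr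
    _ = ‖x‖ + ‖y‖ / t := by ring

theorem bddAbove_range_exp_neg_mul_norm_add_mul (ht : 0 < t) (x y : ℂ) :
    BddAbove (Set.range fun m : ℕ => Real.exp (-(m * t)) * ‖x + m * y‖) :=
  ⟨_, Set.forall_mem_range.2 (exp_neg_mul_norm_add_mul_le ht x y)⟩

theorem shearSeminorm_apply (ht : 0 < t) (v : Fin 2 → ℂ) :
    shearSeminorm t v = ⨆ m : ℕ, Real.exp (-(m * t)) * ‖v 0 + m * v 1‖ := by
  have term_apply (m : ℕ) (w : Fin 2 → ℂ) :
      ((Real.exp (-(m * t))).toNNReal •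
        (normSeminorm ℂ ℂ).comp (LinearMap.proj 0 + (m : ℂ) • LinearMap.proj 1)) w =
      Real.exp (-(m * t)) * ‖w 0 + m * w 1‖ := by
    simp [NNReal.smul_def, Real.exp_nonneg]
  have bdd := fun w : Fin 2 → ℂ => bddAbove_range_exp_neg_mul_norm_add_mul ht (w 0) (w 1)
  simp only [← term_apply] at bdd ⊢
  exact Seminorm.iSup_apply (Seminorm.bddAbove_range_iff.2 bdd)

theorem shearSeminorm_le_iff (ht : 0 < t) {v : Fin 2 → ℂ} {R : ℝ} :
    shearSeminorm t v ≤ R ↔ ∀ m : ℕ, ‖v 0 + m * v 1‖ ≤ R * Real.exp (m * t) := by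
  rw [shearSeminorm_apply ht, ciSup_le_iff (bddAbove_range_exp_neg_mul_norm_add_mul ht _ _)]
  refine forall_congr' fun m => ?_
  rw [Real.exp_neg, inv_mul_le_iff₀ (Real.exp_pos _), mul_comm R]

theorem norm_add_mul_le_shearSeminorm (ht : 0 < t) (v : Fin 2 → ℂ) (m : ℕ) :
    ‖v 0 + m * v 1‖ ≤ shearSeminorm t v * Real.exp (m * t) :=
  (shearSeminorm_le_iff ht).1 le_rfl m

theorem eq_zero_of_shearSeminorm_eq_zero (ht : 0 < t) {v : Fin 2 → ℂ}
    (hv : shearSeminorm t v = 0) : v = 0 := by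
  have vanish (m : ℕ) : v 0 + m * v 1 = 0 := by
    simpa [hv] using norm_add_mul_le_shearSeminorm ht v m
  have h₀ : v 0 = 0 := by simpa using vanish 0
  have h₁ : v 1 = 0 := by simpa [h₀] using vanish 1
  ext i
  fin_cases i
  exacts [h₀, h₁]

theorem shearSeminorm_shear_mulVec_le (ht : 0 < t) (v : Fin 2 → ℂ) :
    shearSeminorm t ((!![1, 1; 0, 1] : Matrix (Fin 2) (Fin 2) ℝ).map Complex.ofReal *ᵥ v) ≤
      Real.exp t * shearSeminorm t v := by
  refine (shearSeminorm_le_iff ht).2 fun m => ?_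
  calc _ = ‖v 0 + (m + 1 : ℕ) * v 1‖ := by
        simp [mulVec, dotProduct, add_one_mul, add_assoc, add_comm (v 1)]
    _ ≤ shearSeminorm t v * Real.exp ((m + 1 : ℕ) * t) := norm_add_mul_le_shearSeminorm ht v _
    _ = Real.exp t * shearSeminorm t v * Real.exp (m * t) := by
        rw [Nat.cast_succ, add_one_mul, Real.exp_add]
        ring

theorem mul_exp_one_add_le (t s : ℝ) :
    s * Real.exp (1 + t) ≤ Real.exp t * Real.exp s := by
  calc s * Real.exp (1 + t) ≤ Real.exp (s - 1) * Real.exp (1 + t) := by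
        gcongr
        linarith [Real.add_one_le_exp (s - 1)]
    _ = Real.exp t * Real.exp s := by
        rw [← Real.exp_add, ← Real.exp_add]
        ring_nf

theorem shearSeminorm_nilpotent_mulVec_le (ht : 0 < t) {c : ℝ} (hc : |c| ≤ t * Real.exp (1 + t))
    (v : Fin 2 → ℂ) :
    shearSeminorm t ((!![0, 0; c, 0] : Matrix (Fin 2) (Fin 2) ℝ).map Complex.ofReal *ᵥ v) ≤
      Real.exp t * shearSeminorm t v := by
  have norm_v₀ : ‖v 0‖ ≤ shearSeminorm t v := by
    simpa using norm_add_mul_le_shearSeminorm ht v 0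
  refine (shearSeminorm_le_iff ht).2 fun m => ?_
  calc _ = m * |c| * ‖v 0‖ := by
        simp [mulVec, dotProduct, mul_assoc]
    _ ≤ m * (t * Real.exp (1 + t)) * shearSeminorm t v := by gcongr
    _ = m * t * Real.exp (1 + t) * shearSeminorm t v := by ring
    _ ≤ Real.exp t * Real.exp (m * t) * shearSeminorm t v :=
        mul_le_mul_of_nonneg_right (mul_exp_one_add_le t (m * t)) (apply_nonneg _ v)
    _ = Real.exp t * shearSeminorm t v * Real.exp (m * t) := by ring

end ShearSeminorm

section SpectralRadius

theorem realMatrixSpectralRadius_shear_nilpotent_prod_le {t c : ℝ} (ht : 0 < t)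
    (hc : |c| ≤ t * Real.exp (1 + t)) {l : List (Matrix (Fin 2) (Fin 2) ℝ)}
    (hl : ∀ M ∈ l, M = !![1, 1; 0, 1] ∨ M = !![0, 0; c, 0]) :
    realMatrixSpectralRadius l.prod ≤ ENNReal.ofReal (Real.exp (l.length * t)) := by
  rw [Real.exp_nat_mul]
  refine realMatrixSpectralRadius_list_prod_le_of_seminorm
    (fun _ => eq_zero_of_shearSeminorm_eq_zero ht) (Real.exp_nonneg t) fun M hM v => ?_
  rcases hl M hM with rfl | rfl
  exacts [shearSeminorm_shear_mulVec_le ht v, shearSeminorm_nilpotent_mulVec_le ht hc v]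

theorem shear_pow {R : Type*} [Semiring R] (m : ℕ) :
    (!![1, 1; 0, 1] : Matrix (Fin 2) (Fin 2) R) ^ m = !![1, (m : R); 0, 1] := by
  induction m with
  | zero => simp [one_fin_two]
  | succ m ih => simp [pow_succ, ih, add_comm]

theorem enorm_le_realMatrixSpectralRadius_shear_pow_mul (m : ℕ) (c : ℝ) :
    ‖m * c‖ₑ ≤ realMatrixSpectralRadius (!![1, 1; 0, 1] ^ m * !![0, 0; c, 0]) := by
  apply enorm_le_realMatrixSpectralRadius_of_isRoot_charpoly
  simp [shear_pow, charpoly_fin_two, trace_fin_two, det_fin_two, sq]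

theorem stmt_10_general {t : ℝ} (ht : 0 < t) :
    (∀ k : ℕ, ∀ M : Fin k → Matrix (Fin 2) (Fin 2) ℝ,
      (∀ j, M j = !![1, 1; 0, 1] ∨ M j = !![0, 0; t * Real.exp (1 + t), 0]) →
      realMatrixSpectralRadius (List.ofFn M).prod ≤ ENNReal.ofReal (Real.exp (k * t))) ∧
    ∀ m : ℕ, m * t = 1 →
      realMatrixSpectralRadius (!![1, 1; 0, 1] ^ m * !![0, 0; t * Real.exp (1 + t), 0]) =
        ENNReal.ofReal (Real.exp ((m + 1) * t)) := by
  have hc : |t * Real.exp (1 + t)| ≤ t * Real.exp (1 + t) := (abs_of_pos (by positivity)).le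
  refine ⟨fun k M hM => ?_, fun m hm => le_antisymm ?_ ?_⟩
  · simpa using realMatrixSpectralRadius_shear_nilpotent_prod_le ht hc
      (List.forall_mem_ofFn_iff.2 hM)
  · have hl : ∀ M ∈ List.replicate m !![1, 1; 0, 1] ++ [!![0, 0; t * Real.exp (1 + t), 0]],
        M = !![1, 1; 0, 1] ∨ M = !![0, 0; t * Real.exp (1 + t), 0] := by
      simp +contextual [or_imp]
    simpa using realMatrixSpectralRadius_shear_nilpotent_prod_le ht hc hl
  · have trace_eq : m * (t * Real.exp (1 + t)) = Real.exp ((m + 1) * t) := by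
      rw [← mul_assoc, hm, one_mul, add_one_mul, hm]
    rw [← trace_eq, ← Real.enorm_of_nonneg (by positivity)]
    exact enorm_le_realMatrixSpectralRadius_shear_pow_mul m _

end SpectralRadius

/-- With `C₀ = !![1,1;0,1]` and `Cₙ = !![0,0;(1/n)e^{1+1/n},0]`, every
ordered product `P = M_k ⋯ M_1` of `k ≥ 1` factors from `{C₀, Cₙ}` satisfies
`ρ(P) ≤ e^{k/n}` (i.e. `ρ(P)^{1/k} ≤ e^{1/n}`), and `C₀^n Cₙ` attains this bound
(it has spectral radius `e^{(n+1)/n}`), so it is a spectral maximizing product. -/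
theorem stmt_10 (n : ℕ) (hn : 1 ≤ n)
    (C₀ Cₙ : Matrix (Fin 2) (Fin 2) ℝ)
    (hC₀ : C₀ = !![1, 1; 0, 1])
    (hCₙ : Cₙ = !![0, 0; (1 / (n : ℝ)) * Real.exp (1 + 1 / (n : ℝ)), 0]) :
    (∀ k : ℕ, 1 ≤ k → ∀ M : Fin k → Matrix (Fin 2) (Fin 2) ℝ,
      (∀ j, M j = C₀ ∨ M j = Cₙ) →
      realMatrixSpectralRadius (List.ofFn M).prod ≤
        ENNReal.ofReal (Real.exp ((k : ℝ) / (n : ℝ)))) ∧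
    realMatrixSpectralRadius (C₀ ^ n * Cₙ) =
      ENNReal.ofReal (Real.exp (((n : ℝ) + 1) / (n : ℝ))) := by
  subst hC₀ hCₙ
  have h := stmt_10_general (t := 1 / (n : ℝ)) (by positivity)
  exact ⟨fun k _ M hM => by simpa only [mul_one_div] using h.1 k M hM,
    by simpa only [mul_one_div] using h.2 n (mul_one_div_cancel (by positivity))⟩
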